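/- arXiv:1012.4017 — 2 statements merged into one kernel-verified Lean document; each statement's English description precedes it below -/
import Mathlib

section
/- Every finite collection of tetrahedra in ℝ³ with pairwise disjoint interiors, where any two tetrahedra intersect in a common face (vertex, edge, or triangular face) or not at all, admits a 4-coloring such that any two tetrahedra sharing a triangular face receive distinct colors. -/
/-!
The tetrahedra are coloured greedily, so it suffices to find, in every nonempty collection, a
tetrahedron with at most three neighbours (`exists_exposed_face` and `neighbours_card_le`).

* A triangle `F` lies in at most two of the tetrahedra. If `F ∪ {v}` and `F ∪ {w}` lie on the same
  side of `F`, then moving from the centroid of `F` slightly towards `w` leaves `F` and stays in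
  both tetrahedra, although they meet only in `F` (`not_same_side`). Hence a tetrahedron has at
  most one neighbour through each of its four faces.
* Some face is contained in only one tetrahedron. Shoot a ray from the centroid of a tetrahedron, in
  a direction such that the ray misses all edges; such a direction exists because a real vector space
  is not a finite union of proper subspaces. The last point of the ray in the (compact) union of
  the tetrahedra lies in the relative interior of a face `F` of some tetrahedron `V`. A second
  tetrahedron containing `F` would lie on the other side of `F` and contain the ray slightly beyond
  its last point.

All of this is carried out in barycentric coordinates.
-/

open scoped Classical

/-- A nondegenerate tetrahedron in `ℝ³`, given by its vertex set. -/
def IsTetrahedron (V : Finset (EuclideanSpace ℝ (Fin 3))) : Prop :=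
  V.card = 4 ∧ AffineIndependent ℝ (fun x : V => (x : EuclideanSpace ℝ (Fin 3)))

open Filter Topology

/-- Euclidean three-space. -/
abbrev E3 := EuclideanSpace ℝ (Fin 3)

/-- The affine functions `l v`, for `v ∈ V`, are the barycentric coordinates with respect to the
vertex set `V` of a tetrahedron. The values of `l` outside `V` are irrelevant. -/
structure IsBary (V : Finset E3) (l : E3 → E3 →ᵃ[ℝ] ℝ) : Prop where
  self : ∀ v ∈ V, l v v = 1
  ne : ∀ v ∈ V, ∀ u ∈ V, u ≠ v → l v u = 0
  map : ∀ (f : E3 →ᵃ[ℝ] ℝ) (x : E3), f x = ∑ v ∈ V, l v x * f v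
  comb : ∀ x : E3, ∑ v ∈ V, l v x • v = x
  hull : ∀ x : E3, x ∈ convexHull ℝ (V : Set E3) ↔ ∀ v ∈ V, 0 ≤ l v x

lemma IsBary.sum_eq_one {V : Finset E3} {l : E3 → E3 →ᵃ[ℝ] ℝ} (h : IsBary V l) (x : E3) :
    ∑ v ∈ V, l v x = 1 := by
  simpa using (h.map (AffineMap.const ℝ E3 1) x).symm

lemma exists_isBary {V : Finset E3} (hV : IsTetrahedron V) : ∃ l, IsBary V l := by
  obtain ⟨hcard, hind⟩ := hV
  have htop : affineSpan ℝ (Set.range (fun x : V => (x : E3))) = ⊤ := by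
    rw [hind.affineSpan_eq_top_iff_card_eq_finrank_add_one]
    simp [hcard]
  let b : AffineBasis V ℝ E3 := ⟨fun x => x, hind, htop⟩
  have hb : ∀ i : V, b i = (i : E3) := fun _ => rfl
  let l : E3 → E3 →ᵃ[ℝ] ℝ := fun v => if h : v ∈ V then b.coord ⟨v, h⟩ else 0
  have hl : ∀ i : V, l i = b.coord i := fun i => by simp [l]
  refine ⟨l, ?_, ?_, ?_, ?_, ?_⟩
  · intro v hv
    rw [hl ⟨v, hv⟩]
    exact b.coord_apply_eq ⟨v, hv⟩
  · intro v hv u hu huv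
    rw [hl ⟨v, hv⟩]
    exact b.coord_apply_ne (i := ⟨v, hv⟩) (j := ⟨u, hu⟩) (fun h => huv (congrArg Subtype.val h).symm)
  · intro f x
    rw [← Finset.sum_coe_sort V]
    have h := b.affineCombination_coord_eq_self x
    conv_lhs => rw [← h]
    rw [Finset.map_affineCombination _ _ _ (b.sum_coord_apply_eq_one x),
      Finset.affineCombination_eq_linear_combination _ _ _ (b.sum_coord_apply_eq_one x)]
    exact Finset.sum_congr rfl fun i _ => by simp [hl, hb]
  · intro x
    rw [← Finset.sum_coe_sort V]
    have h := b.linear_combination_coord_eq_self x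
    conv_rhs => rw [← h]
    exact Finset.sum_congr rfl fun i _ => by simp [hl, hb]
  · intro x
    have hr : (V : Set E3) = Set.range b := by
      ext y; simp [Set.mem_range, hb]
    rw [hr, b.convexHull_eq_nonneg_coord]
    simp only [Set.mem_ofPred_eq, Subtype.forall]
    exact forall₂_congr fun v hv => by rw [hl ⟨v, hv⟩]

lemma affine_move (f : E3 →ᵃ[ℝ] ℝ) (p d : E3) (t : ℝ) :
    f (p + t • d) = f p + t * f.linear d := by
  have := f.map_vadd p (t • d)
  simp only [vadd_eq_add, map_smul, smul_eq_mul] at this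
  rw [add_comm p, this, add_comm]

/-- A point of a tetrahedron may be moved a little in a direction that does not decrease those of
its barycentric coordinates that vanish. -/
lemma eventually_mem_hull {V : Finset E3} {l : E3 → E3 →ᵃ[ℝ] ℝ} (h : IsBary V l) (p d : E3)
    (hp : ∀ v ∈ V, 0 < l v p ∨ (0 ≤ l v p ∧ 0 ≤ (l v).linear d)) :
    ∀ᶠ t : ℝ in 𝓝[>] 0, p + t • d ∈ convexHull ℝ (V : Set E3) := by
  have key : ∀ v ∈ V, ∀ᶠ t : ℝ in 𝓝[>] 0, 0 ≤ l v (p + t • d) := by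
    intro v hv
    rcases hp v hv with h1 | ⟨h1, h2⟩
    · have hc : Tendsto (fun t : ℝ => l v p + t * (l v).linear d) (𝓝[>] 0) (𝓝 (l v p)) := by
        have : Continuous (fun t : ℝ => l v p + t * (l v).linear d) := by fun_prop
        simpa using (this.tendsto 0).mono_left nhdsWithin_le_nhds
      filter_upwards [hc.eventually (lt_mem_nhds h1)] with t ht
      rw [affine_move]
      exact ht.le
    · filter_upwards [self_mem_nhdsWithin] with t ht
      rw [affine_move]
      have : 0 < t := ht
      positivity
  filter_upwards [(Filter.eventually_all_finset V).2 key] with t ht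
  exact (h.hull _).2 ht

/-- Two tetrahedra `F ∪ {v}` and `F ∪ {w}` on the same side of the common face `F` have a common
point outside `F`. -/
lemma not_same_side {F : Finset E3} {v w : E3} (hF : F.card = 3) (hv : v ∉ F)
    {l : E3 → E3 →ᵃ[ℝ] ℝ} (h : IsBary (insert v F) l)
    (hint : convexHull ℝ ((insert v F : Finset E3) : Set E3) ∩
      convexHull ℝ ((insert w F : Finset E3) : Set E3) ⊆ convexHull ℝ (F : Set E3)) :
    l v w ≤ 0 := by
  by_contra! hpos
  have hv0 : ∀ u ∈ F, l v u = 0 := fun u hu =>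
    h.ne v (by simp) u (by simp [hu]) (fun e => hv (e ▸ hu))
  -- `l v` vanishes on the convex hull of `F`
  have hzero : ∀ x ∈ convexHull ℝ (F : Set E3), l v x = 0 := by
    have : convexHull ℝ (F : Set E3) ⊆ (l v) ⁻¹' {0} :=
      convexHull_min (fun u hu => hv0 u hu) ((convex_singleton (0 : ℝ)).affine_preimage (l v))
    exact fun x hx => this hx
  have hne : F.Nonempty := Finset.card_pos.1 (by omega)
  have hpF : F.centroid ℝ id ∈ convexHull ℝ (F : Set E3) := by
    simpa using Finset.centroid_mem_convexHull F hne
  have hpc : ∀ f : E3 →ᵃ[ℝ] ℝ, f (F.centroid ℝ id) = ∑ u ∈ F, (3 : ℝ)⁻¹ * f u := by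
    intro f
    have hs := F.sum_centroidWeights_eq_one_of_nonempty ℝ hne
    rw [Finset.centroid_def, Finset.map_affineCombination _ _ _ hs,
      Finset.affineCombination_eq_linear_combination _ _ _ hs]
    simp [hF]
  set p := F.centroid ℝ id with hp
  have hmove : ∀ᶠ t : ℝ in 𝓝[>] 0, p + t • (w - p) ∈
      convexHull ℝ ((insert v F : Finset E3) : Set E3) := by
    refine eventually_mem_hull h _ _ fun u hu => ?_
    rcases Finset.mem_insert.1 hu with rfl | hu'
    · right
      refine ⟨(hzero p hpF).ge, ?_⟩
      have := affine_move (l u) p (w - p) 1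
      rw [one_smul, add_sub_cancel, hzero p hpF] at this
      linarith
    · left
      rw [hpc, Finset.sum_eq_single_of_mem u hu'
        (fun b hb hbu => by rw [h.ne u hu b (by simp [hb]) hbu, mul_zero]), h.self u hu]
      norm_num
  have hle : ∀ᶠ t : ℝ in 𝓝[>] 0, t < 1 :=
    nhdsWithin_le_nhds (gt_mem_nhds (zero_lt_one' ℝ))
  obtain ⟨t, ⟨ht1, ht2⟩, ht0⟩ := ((hmove.and hle).and self_mem_nhdsWithin).exists
  have ht0 : 0 < t := ht0
  have hW : p + t • (w - p) ∈ convexHull ℝ ((insert w F : Finset E3) : Set E3) := by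
    refine (convex_convexHull ℝ _).add_smul_sub_mem ?_ ?_ ⟨ht0.le, ht2.le⟩
    · exact convexHull_mono (by simp) hpF
    · exact subset_convexHull ℝ _ (by simp)
  have h0 := hzero _ (hint ⟨ht1, hW⟩)
  have h1 := affine_move (l v) p (w - p) 1
  rw [one_smul, add_sub_cancel, hzero p hpF] at h1
  rw [affine_move, hzero p hpF] at h0
  have : 0 < t * (l v).linear (w - p) := mul_pos ht0 (by linarith)
  linarith

/-- Two tetrahedra `F ∪ {v}` and `F ∪ {w}` have proportional coordinate functions for their
apices, since both functions vanish on `F`. -/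
lemma apex_coord {F : Finset E3} {v w : E3} (hv : v ∉ F) (hw : w ∉ F)
    {l m : E3 → E3 →ᵃ[ℝ] ℝ} (h : IsBary (insert v F) l) (h' : IsBary (insert w F) m) (x : E3) :
    l v x = m w x * l v w := by
  rw [h'.map (l v) x, Finset.sum_insert hw, Finset.sum_eq_zero, add_zero]
  intro u hu
  rw [h.ne v (by simp) u (by simp [hu]) (fun e => hv (e ▸ hu)), mul_zero]

/-- The hypotheses on the collection: its members are tetrahedra, any two of which meet in the
convex hull of their common vertices. -/
def IsComplex (S : Finset (Finset E3)) : Prop :=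
  (∀ V ∈ S, IsTetrahedron V) ∧ ∀ V ∈ S, ∀ W ∈ S, V ≠ W →
    convexHull ℝ (V : Set E3) ∩ convexHull ℝ (W : Set E3) = convexHull ℝ ((V ∩ W : Finset E3) : Set E3)

lemma exists_apex {F V : Finset E3} (hF : F.card = 3) (hV : V.card = 4) (h : F ⊆ V) :
    ∃ v, v ∉ F ∧ V = insert v F := by
  obtain ⟨v, hv⟩ := Finset.card_eq_one.1 (show (V \ F).card = 1 by
    rw [Finset.card_sdiff_of_subset h]; omega)
  refine ⟨v, ?_, ?_⟩
  · have : v ∈ V \ F := by simp [hv]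
    exact (Finset.mem_sdiff.1 this).2
  · rw [← Finset.sdiff_union_of_subset h, hv]; rfl

/-- Two distinct tetrahedra of a complex that contain `F` lie strictly on opposite sides of `F`. -/
lemma opposite_side {S : Finset (Finset E3)} (hS : IsComplex S) {F : Finset E3} {v w : E3}
    (hF : F.card = 3) (hv : v ∉ F) (hw : w ∉ F) (hVS : insert v F ∈ S) (hWS : insert w F ∈ S)
    (hvw : v ≠ w) {l : E3 → E3 →ᵃ[ℝ] ℝ} (h : IsBary (insert v F) l) : l v w < 0 := by
  have hne : insert v F ≠ insert w F := by
    intro e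
    have : v ∈ insert w F := e ▸ Finset.mem_insert_self v F
    simp [hvw, hv] at this
  have hle : l v w ≤ 0 := by
    refine not_same_side hF hv h ?_
    rw [hS.2 _ hVS _ hWS hne]
    refine convexHull_mono ?_
    intro x hx
    simp only [Finset.coe_inter, Finset.coe_insert, Set.mem_inter_iff, Set.mem_insert_iff] at hx
    rcases hx with ⟨rfl | hx, hx' | hx'⟩
    exacts [absurd hx' hvw, hx', hx, hx]
  obtain ⟨m, hm⟩ := exists_isBary (hS.1 _ hWS)
  refine lt_of_le_of_ne hle fun e => ?_
  have := apex_coord hv hw h hm v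
  rw [h.self v (by simp), e, mul_zero] at this
  exact one_ne_zero this

/-- A triangle is contained in at most two tetrahedra of a complex. -/
lemma face_unique {S : Finset (Finset E3)} (hS : IsComplex S) {F : Finset E3} {v w x : E3}
    (hF : F.card = 3) (hv : v ∉ F) (hw : w ∉ F) (hx : x ∉ F) (hVS : insert v F ∈ S)
    (hWS : insert w F ∈ S) (hXS : insert x F ∈ S) (hvw : v ≠ w) (hvx : v ≠ x) : w = x := by
  by_contra hwx
  obtain ⟨l, hl⟩ := exists_isBary (hS.1 _ hVS)
  obtain ⟨m, hm⟩ := exists_isBary (hS.1 _ hWS)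
  have h1 := opposite_side hS hF hv hw hVS hWS hvw hl
  have h2 := opposite_side hS hF hv hx hVS hXS hvx hl
  have h3 := opposite_side hS hF hw hx hWS hXS hwx hm
  have := apex_coord hv hw hl hm x
  nlinarith

/-- The last point of a ray in the union of the tetrahedra. -/
lemma exists_last {S : Finset (Finset E3)} {q d : E3} (hd : d ≠ 0) {V₀ : Finset E3} (hV₀ : V₀ ∈ S)
    (hq : q ∈ convexHull ℝ (V₀ : Set E3)) :
    ∃ t : ℝ, 0 ≤ t ∧ (∃ V ∈ S, q + t • d ∈ convexHull ℝ (V : Set E3)) ∧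
      ∀ s, t < s → ∀ V ∈ S, q + s • d ∉ convexHull ℝ (V : Set E3) := by
  let K : Set E3 := ⋃ V ∈ S, convexHull ℝ (V : Set E3)
  have hmem : ∀ x, x ∈ K ↔ ∃ V ∈ S, x ∈ convexHull ℝ (V : Set E3) := by
    intro x; simp [K]
  have hK : IsCompact K :=
    S.isCompact_biUnion fun V _ => V.finite_toSet.isCompact_convexHull ℝ
  let T : Set ℝ := {t | q + t • d ∈ K}
  have hT : IsClosed T := hK.isClosed.preimage (by fun_prop : Continuous fun t : ℝ => q + t • d)
  have h0 : (0 : ℝ) ∈ T := by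
    simp only [T, Set.mem_ofPred_eq, zero_smul, add_zero]
    exact (hmem q).2 ⟨V₀, hV₀, hq⟩
  have hb : BddAbove T := by
    obtain ⟨R, hR⟩ := hK.isBounded.exists_norm_le
    refine ⟨(R + ‖q‖) / ‖d‖, fun t ht => ?_⟩
    rw [le_div_iff₀ (norm_pos_iff.2 hd)]
    calc t * ‖d‖ ≤ |t| * ‖d‖ := by gcongr; exact le_abs_self t
      _ = ‖(q + t • d) - q‖ := by simp [norm_smul]
      _ ≤ ‖q + t • d‖ + ‖q‖ := norm_sub_le _ _
      _ ≤ R + ‖q‖ := by gcongr; exact hR _ ht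
  refine ⟨sSup T, le_csSup hb h0, (hmem _).1 (hT.csSup_mem ⟨0, h0⟩ hb), ?_⟩
  intro s hs V hV hsV
  exact absurd (le_csSup hb (show s ∈ T from (hmem _).2 ⟨V, hV, hsV⟩)) (not_le.2 hs)

/-- There is a direction in which the ray from `q` misses all lines through two vertices of a
tetrahedron, except possibly at `q` itself. -/
lemma exists_direction (S : Finset (Finset E3)) (q : E3) :
    ∃ d : E3, d ≠ 0 ∧ ∀ V ∈ S, ∀ G ⊆ V, G.card = 2 →
      d ∉ Submodule.span ℝ ((G.image (· - q) : Finset E3) : Set E3) := by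
  let I : Finset (Finset E3) := insert ∅ (S.biUnion fun V => V.powersetCard 2)
  have hI : ∀ G ∈ I, G.card ≤ 2 := by
    intro G hG
    rcases Finset.mem_insert.1 hG with rfl | hG
    · simp
    · obtain ⟨V, -, hG⟩ := Finset.mem_biUnion.1 hG
      exact (Finset.mem_powersetCard.1 hG).2.le
  let M : Finset E3 → Submodule ℝ E3 := fun G =>
    Submodule.span ℝ ((G.image (· - q) : Finset E3) : Set E3)
  have hM : ∀ G ∈ I, M G ≠ ⊤ := by
    intro G hG e
    have h1 : Module.finrank ℝ (M G) ≤ (G.image (· - q)).card := finrank_span_finset_le_card _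
    rw [e, finrank_top, finrank_euclideanSpace_fin] at h1
    have := Finset.card_image_le (s := G) (f := (· - q))
    have := hI G hG
    omega
  have hne : (⋃ W ∈ I.image M, (W : Set E3)) ≠ Set.univ := by
    refine Subspace.biUnion_ne_univ_of_top_notMem ?_
    intro h
    obtain ⟨G, hG, e⟩ := Finset.mem_image.1 h
    exact hM G hG e
  obtain ⟨d, hd⟩ := (Set.ne_univ_iff_exists_notMem _).1 hne
  have hd' : ∀ G ∈ I, d ∉ M G := by
    intro G hG hdG
    exact hd (Set.mem_biUnion (Finset.mem_coe.2 (Finset.mem_image_of_mem M hG)) hdG)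
  refine ⟨d, fun e => hd' ∅ (by simp [I]) (e ▸ zero_mem _), fun V hV G hG hc => hd' G ?_⟩
  exact Finset.mem_insert_of_mem (Finset.mem_biUnion.2 ⟨V, hV, Finset.mem_powersetCard.2 ⟨hG, hc⟩⟩)

/-- Some tetrahedron of a nonempty complex has a face that lies in no other tetrahedron. -/
lemma exists_exposed_face {S : Finset (Finset E3)} (hS : IsComplex S) (hne : S.Nonempty) :
    ∃ V ∈ S, ∃ F ⊆ V, F.card = 3 ∧ ∀ W ∈ S, F ⊆ W → W = V := by
  obtain ⟨V₀, hV₀⟩ := hne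
  obtain ⟨l₀, h₀⟩ := exists_isBary (hS.1 _ hV₀)
  have hc₀ := (hS.1 _ hV₀).1
  -- `q` is the centroid of `V₀`
  obtain ⟨q, hq⟩ : ∃ q, ∀ v ∈ V₀, 0 < l₀ v q := by
    have hne : V₀.Nonempty := Finset.card_pos.1 (by omega)
    refine ⟨V₀.centroid ℝ id, fun v hv => ?_⟩
    have hs := V₀.sum_centroidWeights_eq_one_of_nonempty ℝ hne
    rw [Finset.centroid_def, Finset.map_affineCombination _ _ _ hs,
      Finset.affineCombination_eq_linear_combination _ _ _ hs,
      Finset.sum_eq_single_of_mem v hv (fun b hb hbv => by simp [h₀.ne v hv b hb hbv])]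
    simp [h₀.self v hv, hc₀]
  obtain ⟨d, hd, hgen⟩ := exists_direction S q
  obtain ⟨t, ht0, ⟨V, hV, hpV⟩, hlast⟩ :=
    exists_last hd hV₀ ((h₀.hull q).2 fun v hv => (hq v hv).le)
  obtain ⟨l, h⟩ := exists_isBary (hS.1 _ hV)
  have hc := (hS.1 _ hV).1
  set p := q + t • d with hp
  clear_value p
  -- beyond `p`, the ray meets no tetrahedron
  have hexit : ∀ W ∈ S, ¬ ∀ᶠ s : ℝ in 𝓝[>] 0, p + s • d ∈ convexHull ℝ (W : Set E3) := by
    intro W hW he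
    obtain ⟨s, hs, hs0⟩ := (he.and self_mem_nhdsWithin).exists
    have hs0 : 0 < s := hs0
    refine hlast (t + s) (by linarith) W hW ?_
    rwa [add_smul, ← add_assoc, ← hp]
  have hpos : 0 < t := by
    rcases ht0.lt_or_eq with h1 | h1
    · exact h1
    · exact absurd (eventually_mem_hull h₀ p d fun v hv => Or.inl (by
        simpa [hp, ← h1] using hq v hv)) (hexit V₀ hV₀)
  have hnn := (h.hull p).1 hpV
  -- `p` is not in the interior of `V`
  obtain ⟨v, hv, hv0⟩ : ∃ v ∈ V, l v p = 0 := by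
    by_contra! hcon
    exact hexit V hV (eventually_mem_hull h p d fun v hv =>
      Or.inl (lt_of_le_of_ne (hnn v hv) (hcon v hv).symm))
  -- `p` is not on an edge of `V`
  have hFpos : ∀ u ∈ V.erase v, 0 < l u p := by
    intro u hu
    have huV := Finset.mem_of_mem_erase hu
    refine lt_of_le_of_ne (hnn u huV) fun e => ?_
    have hG : ((V.erase v).erase u).card = 2 := by
      rw [Finset.card_erase_of_mem hu, Finset.card_erase_of_mem hv]; omega
    refine hgen V hV ((V.erase v).erase u)
      ((Finset.erase_subset _ _).trans (Finset.erase_subset _ _)) hG ?_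
    have h1 : t • d = ∑ x ∈ (V.erase v).erase u, l x p • (x - q) := by
      have h2 : ∑ x ∈ V, l x p • (x - q) = t • d := by
        simp only [smul_sub, Finset.sum_sub_distrib]
        rw [h.comb, ← Finset.sum_smul, h.sum_eq_one, one_smul, hp, add_sub_cancel_left]
      rw [← h2, ← Finset.add_sum_erase V _ hv, ← Finset.add_sum_erase _ _ hu, hv0, ← e]
      simp
    have h3 : t • d ∈ Submodule.span ℝ
        ((((V.erase v).erase u).image (· - q) : Finset E3) : Set E3) := by
      rw [h1]
      exact Submodule.sum_mem _ fun x hx => Submodule.smul_mem _ _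
        (Submodule.subset_span (Finset.mem_coe.2 (Finset.mem_image_of_mem _ hx)))
    exact (Submodule.smul_mem_iff _ hpos.ne').1 h3
  have hdneg : (l v).linear d < 0 := by
    by_contra! hcon
    refine hexit V hV (eventually_mem_hull h p d fun u hu => ?_)
    by_cases huv : u = v
    · exact Or.inr ⟨hnn u hu, huv ▸ hcon⟩
    · exact Or.inl (hFpos u (Finset.mem_erase.2 ⟨huv, hu⟩))
  have hFc : (V.erase v).card = 3 := by rw [Finset.card_erase_of_mem hv]; omega
  refine ⟨V, hV, V.erase v, Finset.erase_subset _ _, hFc, fun W hW hFW => ?_⟩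
  by_contra hWV
  obtain ⟨w, hw, rfl⟩ := exists_apex hFc (hS.1 _ hW).1 hFW
  have hvF : v ∉ V.erase v := Finset.notMem_erase v V
  have hVe : insert v (V.erase v) = V := Finset.insert_erase hv
  generalize V.erase v = F at *
  subst hVe
  have hvw : v ≠ w := fun e => hWV (by rw [e])
  obtain ⟨m, hm⟩ := exists_isBary (hS.1 _ hW)
  have hneg := opposite_side hS hFc hvF hw hV hW hvw h
  have hprop := apex_coord hvF hw h hm
  refine hexit _ hW (eventually_mem_hull hm p d fun u hu => ?_)
  rcases Finset.mem_insert.1 hu with rfl | huF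
  · right
    have hp0 : m u p = 0 := by
      have := hprop p
      rw [hv0] at this
      exact (mul_eq_zero.1 this.symm).resolve_right hneg.ne
    refine ⟨hp0.ge, ?_⟩
    have h1 := hprop (p + (1 : ℝ) • d)
    rw [affine_move, affine_move, hv0, hp0] at h1
    nlinarith
  · left
    -- the coordinates of `p` at the vertices of `F` agree in both tetrahedra
    rw [h.map (m u) p, Finset.sum_insert hvF, hv0, zero_mul, zero_add,
      Finset.sum_eq_single_of_mem u huF
        (fun b hb hbu => by rw [hm.ne u hu b (by simp [hb]) hbu, mul_zero]), hm.self u hu, mul_one]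
    exact hFpos u huF

/-- A tetrahedron with an exposed face has at most three neighbours, one for each other face. -/
lemma neighbours_card_le {S : Finset (Finset E3)} (hS : IsComplex S) {V F : Finset E3}
    (hV : V ∈ S) (hFV : F ⊆ V) (hF : F.card = 3) (hexp : ∀ W ∈ S, F ⊆ W → W = V) :
    ((S.erase V).filter fun W => (V ∩ W).card = 3).card ≤ 3 := by
  have hc := (hS.1 _ hV).1
  have h3 : ((V.powersetCard 3).erase F).card = 3 := by
    rw [Finset.card_erase_of_mem (Finset.mem_powersetCard.2 ⟨hFV, hF⟩), Finset.card_powersetCard, hc]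
    rfl
  refine (Finset.card_le_card_of_injOn (fun W => V ∩ W) ?_ ?_).trans_eq h3
  · intro W hW
    simp only [Finset.coe_filter, Finset.mem_erase, Set.mem_ofPred_eq] at hW
    simp only [Finset.coe_erase, Set.mem_sdiff, Finset.mem_coe, Finset.mem_powersetCard,
      Set.mem_singleton_iff]
    refine ⟨⟨Finset.inter_subset_left, hW.2⟩, fun e => hW.1.1 (hexp W hW.1.2 ?_)⟩
    rw [← e]
    exact Finset.inter_subset_right
  · intro W hW X hX e
    simp only [Finset.coe_filter, Finset.mem_erase, Set.mem_ofPred_eq] at hW hX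
    have e : V ∩ W = V ∩ X := e
    have hWG : V ∩ W ⊆ W := Finset.inter_subset_right
    have hXG : V ∩ W ⊆ X := e ▸ Finset.inter_subset_right
    have hVG : V ∩ W ⊆ V := Finset.inter_subset_left
    obtain ⟨⟨hWV, hWS⟩, hG⟩ := hW
    obtain ⟨⟨hXV, hXS⟩, -⟩ := hX
    generalize V ∩ W = G at *
    obtain ⟨v, hv, rfl⟩ := exists_apex hG hc hVG
    obtain ⟨w, hw, rfl⟩ := exists_apex hG (hS.1 _ hWS).1 hWG
    obtain ⟨x, hx, rfl⟩ := exists_apex hG (hS.1 _ hXS).1 hXG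
    rw [face_unique hS hG hv hw hx hV hWS hXS (fun e => hWV (by rw [e])) (fun e => hXV (by rw [e]))]

lemma exists_coloring (n : ℕ) : ∀ S : Finset (Finset E3), S.card = n → IsComplex S →
    ∃ c : Finset E3 → Fin 4, ∀ V ∈ S, ∀ W ∈ S, V ≠ W → (V ∩ W).card = 3 → c V ≠ c W := by
  induction n with
  | zero =>
    intro S hS _
    rw [Finset.card_eq_zero.1 hS]
    exact ⟨fun _ => 0, by simp⟩
  | succ n ih =>
    intro S hcard hS
    obtain ⟨V, hV, F, hFV, hF, hexp⟩ :=
      exists_exposed_face hS (Finset.card_pos.1 (by omega))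
    obtain ⟨c, hc⟩ := ih (S.erase V) (by rw [Finset.card_erase_of_mem hV]; omega)
      ⟨fun W hW => hS.1 W (Finset.mem_of_mem_erase hW), fun W hW X hX =>
        hS.2 W (Finset.mem_of_mem_erase hW) X (Finset.mem_of_mem_erase hX)⟩
    let N := (S.erase V).filter fun W => (V ∩ W).card = 3
    have hN : N.card ≤ 3 := neighbours_card_le hS hV hFV hF hexp
    obtain ⟨k, hk⟩ : ∃ k, k ∉ N.image c := by
      by_contra! hall
      have h1 := Finset.card_le_card (fun k _ => hall k : Finset.univ ⊆ N.image c)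
      have h2 := Finset.card_image_le (s := N) (f := c)
      simp only [Finset.card_univ, Fintype.card_fin] at h1
      omega
    have hk' : ∀ W ∈ S, W ≠ V → (V ∩ W).card = 3 → k ≠ c W := fun W hW hWV h3 e =>
      hk (Finset.mem_image.2 ⟨W, Finset.mem_filter.2 ⟨Finset.mem_erase.2 ⟨hWV, hW⟩, h3⟩, e.symm⟩)
    refine ⟨Function.update c V k, fun W hW X hX hWX h3 => ?_⟩
    by_cases hWV : W = V
    · subst hWV
      rw [Function.update_self, Function.update_of_ne hWX.symm]
      exact hk' X hX hWX.symm h3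
    · rw [Function.update_of_ne hWV]
      by_cases hXV : X = V
      · subst hXV
        rw [Function.update_self]
        exact (hk' W hW hWV (by rwa [Finset.inter_comm])).symm
      · rw [Function.update_of_ne hXV]
        exact hc W (Finset.mem_erase.2 ⟨hWV, hW⟩) X (Finset.mem_erase.2 ⟨hXV, hX⟩) hWX h3

/-- Every finite collection of tetrahedra in `ℝ³` with pairwise disjoint interiors, any
two of which intersect in a common face (vertex, edge, or triangular face) or not at
all, admits a 4-coloring in which tetrahedra sharing a triangular face receive distinct
colors. -/
theorem tetrahedron_four_coloring (S : Finset (Finset (EuclideanSpace ℝ (Fin 3))))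
    (hsimp : ∀ V ∈ S, IsTetrahedron V)
    (hdisj : ∀ V ∈ S, ∀ W ∈ S, V ≠ W →
      Disjoint (interior (convexHull ℝ (V : Set (EuclideanSpace ℝ (Fin 3)))))
        (interior (convexHull ℝ (W : Set (EuclideanSpace ℝ (Fin 3))))))
    (hface : ∀ V ∈ S, ∀ W ∈ S, V ≠ W →
      convexHull ℝ (V : Set (EuclideanSpace ℝ (Fin 3))) ∩
          convexHull ℝ (W : Set (EuclideanSpace ℝ (Fin 3))) =
        convexHull ℝ ((V ∩ W : Finset (EuclideanSpace ℝ (Fin 3))) :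
          Set (EuclideanSpace ℝ (Fin 3)))) :
    ∃ c : Finset (EuclideanSpace ℝ (Fin 3)) → Fin 4,
      ∀ V ∈ S, ∀ W ∈ S, V ≠ W → (V ∩ W).card = 3 → c V ≠ c W := by
  exact exists_coloring _ S rfl ⟨hsimp, hface⟩
end

section
/- Every pure d-dimensional simplicial complex in ℝ^d (possibly infinite) can be properly (d+1)-colored: there is an assignment of one of d+1 colors to each d-simplex such that any two simplices sharing a (d−1)-facet receive different colors. -/
/-! Every finite nonempty subcomplex `F` contains a simplex with at most `d` neighbours in `F`
(`exists_low_degree`). Greedy colouring then gives a proper `(d+1)`-colouring of every finite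
subcomplex (`exists_finite_coloring`), and Rado's selection lemma (the compactness argument behind
the de Bruijn–Erdős theorem) passes to the infinite complex.

For the degree bound, fix a point `x`. For a simplex with vertices `f 0, …, f d`, let
`facetVol f i x` be the volume (up to the factor `d!`) of the simplex obtained by replacing `f i`
with `x`, signed so as to be positive when `x` lies on the same side of the `i`-th facet as `f i`.
Cramer's rule gives `∑ i, facetVol f i x = |vdet f| > 0` (`sum_facetVol`). Two simplices sharing a
facet lie on opposite sides of it, since otherwise their hulls would meet outside the facet
(`exists_mem_hulls_of_same_side`); hence their signed volumes at that facet are opposite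
(`facetVol_eq_neg`). In particular each facet is shared by at most one other simplex, so every
simplex has at most `d + 1` neighbours. If every simplex of `F` had `d + 1` neighbours, all facets
would be shared in pairs and the total volume of `F` would cancel to zero, which is absurd.
-/

open scoped Classical

/-- A nondegenerate `d`-simplex in `ℝ^d`, given by its vertex set. -/
def IsSimplex (d : ℕ) (V : Finset (EuclideanSpace ℝ (Fin d))) : Prop :=
  V.card = d + 1 ∧
    AffineIndependent ℝ (fun x : V => (x : EuclideanSpace ℝ (Fin d)))

section

open Finset Function

/-! ### Determinants of point configurations -/

/-- Homogeneous coordinates `(1, x₀, …, x_{d-1})` of a point of `ℝ^d`. -/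
def homCoord {d : ℕ} (x : EuclideanSpace ℝ (Fin d)) : Fin (d + 1) → ℝ :=
  Fin.cons 1 (fun i => x i)

/-- The determinant of the homogeneous coordinates of `d + 1` points of `ℝ^d`: up to the factor
`d!`, the signed volume of the simplex they span. -/
noncomputable def vdet {d : ℕ} (f : Fin (d + 1) → EuclideanSpace ℝ (Fin d)) : ℝ :=
  Matrix.det (Matrix.of fun i => homCoord (f i))

theorem homCoord_sum {d : ℕ} {ι : Type*} (s : Finset ι) (a : ι → ℝ)
    (z : ι → EuclideanSpace ℝ (Fin d)) (ha : ∑ j ∈ s, a j = 1) :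
    homCoord (∑ j ∈ s, a j • z j) = ∑ j ∈ s, a j • homCoord (z j) := by
  ext i
  refine Fin.cases ?_ (fun i => ?_) i
  · simp [homCoord, Finset.sum_apply, ha]
  · simp [homCoord, Finset.sum_apply]

theorem vdet_update {d : ℕ} (f : Fin (d + 1) → EuclideanSpace ℝ (Fin d)) (i : Fin (d + 1))
    (x : EuclideanSpace ℝ (Fin d)) :
    vdet (update f i x) = Matrix.cramer (Matrix.of fun i => homCoord (f i)).transpose
      (homCoord x) i := by
  rw [Matrix.cramer_transpose_apply, vdet]
  congr 1
  ext a b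
  by_cases h : a = i
  · subst h; simp
  · simp [h]

theorem vdet_comp_perm {d : ℕ} (f : Fin (d + 1) → EuclideanSpace ℝ (Fin d))
    (σ : Equiv.Perm (Fin (d + 1))) :
    vdet (f ∘ σ) = ((Equiv.Perm.sign σ : ℤ) : ℝ) * vdet f :=
  Matrix.det_permute σ (Matrix.of fun i => homCoord (f i))

theorem sum_smul_homCoord {d : ℕ} (f : Fin (d + 1) → EuclideanSpace ℝ (Fin d))
    (x : EuclideanSpace ℝ (Fin d)) :
    ∑ i, vdet (update f i x) • homCoord (f i) = vdet f • homCoord x := by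
  have h := Matrix.mulVec_cramer (Matrix.of fun i => homCoord (f i)).transpose (homCoord x)
  rw [Matrix.det_transpose] at h
  rw [vdet, ← h]
  ext j
  simp only [vdet_update, Finset.sum_apply, Pi.smul_apply, smul_eq_mul, Matrix.mulVec, dotProduct]
  exact Finset.sum_congr rfl fun i _ => mul_comm _ _

theorem sum_vdet_update {d : ℕ} (f : Fin (d + 1) → EuclideanSpace ℝ (Fin d))
    (x : EuclideanSpace ℝ (Fin d)) : ∑ i, vdet (update f i x) = vdet f := by
  have h := congrFun (sum_smul_homCoord f x) 0
  simpa [homCoord, Finset.sum_apply] using h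

theorem sum_smul_eq {d : ℕ} (f : Fin (d + 1) → EuclideanSpace ℝ (Fin d))
    (x : EuclideanSpace ℝ (Fin d)) :
    ∑ i, vdet (update f i x) • f i = vdet f • x := by
  ext j
  have h := congrFun (sum_smul_homCoord f x) j.succ
  simpa [homCoord, Finset.sum_apply] using h

theorem vdet_ne_zero {d : ℕ} {f : Fin (d + 1) → EuclideanSpace ℝ (Fin d)}
    (hf : AffineIndependent ℝ f) : vdet f ≠ 0 := by
  intro h
  rw [vdet, ← Matrix.exists_vecMul_eq_zero_iff] at h
  obtain ⟨v, hv, h⟩ := h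
  apply hv
  rw [affineIndependent_iff] at hf
  have h0 := congrFun h 0
  ext i
  refine hf univ v ?_ ?_ i (mem_univ i)
  · simpa [Matrix.vecMul, dotProduct, homCoord] using h0
  · ext j
    have hj := congrFun h j.succ
    simpa [Matrix.vecMul, dotProduct, homCoord] using hj

theorem vdet_update_sum {d : ℕ} {ι : Type*} (f : Fin (d + 1) → EuclideanSpace ℝ (Fin d))
    (i : Fin (d + 1)) (s : Finset ι) (a : ι → ℝ) (z : ι → EuclideanSpace ℝ (Fin d))
    (ha : ∑ j ∈ s, a j = 1) :
    vdet (update f i (∑ j ∈ s, a j • z j)) = ∑ j ∈ s, a j * vdet (update f i (z j)) := by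
  simp only [vdet_update, homCoord_sum s a z ha, map_sum, map_smul, Finset.sum_apply,
    Pi.smul_apply, smul_eq_mul]

theorem vdet_update_of_ne {d : ℕ} (f : Fin (d + 1) → EuclideanSpace ℝ (Fin d))
    {i j : Fin (d + 1)} (h : j ≠ i) : vdet (update f i (f j)) = 0 := by
  refine Matrix.det_zero_of_row_eq h ?_
  ext b
  simp [h]

/-! ### Sides of a facet -/

/-- If `w` lies on the same side of the `i`-th facet as `f i`, then the two simplices `f` and
`update f i w` have a common point off that facet. -/
theorem exists_mem_hulls_of_same_side {d : ℕ} (f : Fin (d + 1) → EuclideanSpace ℝ (Fin d))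
    (i : Fin (d + 1)) (w : EuclideanSpace ℝ (Fin d))
    (h : 0 < vdet f * vdet (update f i w)) :
    ∃ x, x ∈ convexHull ℝ (Set.range f) ∧ x ∈ convexHull ℝ (Set.range (update f i w)) ∧
      x ∉ convexHull ℝ (f '' {j | j ≠ i}) := by
  have hf : vdet f ≠ 0 := fun h0 => by simp [h0] at h
  have hw : vdet (update f i w) ≠ 0 := fun h0 => by simp [h0] at h
  -- barycentric coordinates of `w` with respect to `f`
  set b : Fin (d + 1) → ℝ := fun j => vdet (update f j w) / vdet f with hb
  have hbi : 0 < b i := by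
    have : b i = (vdet f * vdet (update f i w)) / (vdet f) ^ 2 := by
      simp only [hb]; field_simp
    rw [this]; positivity
  have hb1 : ∑ j, b j = 1 := by
    simp only [hb, ← Finset.sum_div, sum_vdet_update]
    exact div_self hf
  have hbw : ∑ j, b j • f j = w := by
    have := sum_smul_eq f w
    rw [← inv_smul_smul₀ hf w, ← this, Finset.smul_sum]
    simp only [hb, smul_smul, div_eq_inv_mul]
  -- the common point is `w` averaged with the vertices of the facet, these with a large weight `K`
  set K : ℝ := ∑ j, |b j| with hK
  have hK0 : 0 ≤ K := Finset.sum_nonneg fun j _ => abs_nonneg _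
  have hKb : ∀ j, 0 ≤ b j + K := fun j => by
    have h1 : |b j| ≤ K := Finset.single_le_sum (f := fun j => |b j|)
      (fun j _ => abs_nonneg _) (mem_univ j)
    linarith [neg_abs_le (b j)]
  set a : Fin (d + 1) → ℝ := fun j => if j = i then 1 else K with ha
  set T : ℝ := ∑ j, a j with hT
  have ha0 : ∀ j, 0 ≤ a j := fun j => by
    simp only [ha]; split_ifs <;> [exact zero_le_one; exact hK0]
  have hTpos : 0 < T := by
    have h1 : a i ≤ T := Finset.single_le_sum (fun j _ => ha0 j) (mem_univ i)
    have : a i = 1 := by simp [ha]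
    linarith
  set c : Fin (d + 1) → ℝ := fun j => b j + if j = i then 0 else K with hc
  have hc0 : ∀ j, 0 ≤ c j := fun j => by
    simp only [hc]
    split_ifs with hj
    · subst hj; linarith
    · exact hKb j
  have hcT : ∑ j, c j = T := by
    rw [hT, ← Finset.add_sum_erase _ a (mem_univ i)]
    simp only [hc, Finset.sum_add_distrib, hb1]
    rw [← Finset.add_sum_erase _ _ (mem_univ i)]
    simp only [ha, if_true, zero_add]
    congr 1
    exact Finset.sum_congr rfl fun j hj => by simp [Finset.ne_of_mem_erase hj]
  have hsum : ∑ j, c j • f j = ∑ j, a j • update f i w j := by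
    rw [← Finset.add_sum_erase _ (fun j => a j • update f i w j) (mem_univ i)]
    simp only [hc, add_smul, Finset.sum_add_distrib, hbw]
    rw [← Finset.add_sum_erase _ _ (mem_univ i)]
    simp only [ha, if_true, zero_smul, zero_add, one_smul, update_self]
    congr 1
    exact Finset.sum_congr rfl fun j hj => by simp [Finset.ne_of_mem_erase hj]
  refine ⟨univ.centerMass a (update f i w), ?_, ?_, ?_⟩
  · have : univ.centerMass a (update f i w) = univ.centerMass c f := by
      rw [Finset.centerMass, Finset.centerMass, hsum, hcT]
    rw [this]
    exact Finset.centerMass_mem_convexHull _ (fun j _ => hc0 j) (hcT ▸ hTpos)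
      fun j _ => Set.mem_range_self j
  · exact Finset.centerMass_mem_convexHull _ (fun j _ => ha0 j) hTpos
      fun j _ => Set.mem_range_self j
  · intro hx
    -- the facet lies in the zero set of the affine function `vdet (update f i ·)`
    have hconv : Convex ℝ {y | vdet (update f i y) = 0} := by
      intro y hy z hz s t _ _ hst
      have := vdet_update_sum f i univ ![s, t] ![y, z] (by simpa using hst)
      simp only [Fin.sum_univ_two, Matrix.cons_val_zero, Matrix.cons_val_one] at this
      simp only [Set.mem_ofPred_eq] at hy hz ⊢
      rw [this, hy, hz]; simp
    have hsub : f '' {j | j ≠ i} ⊆ {y | vdet (update f i y) = 0} := by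
      rintro _ ⟨j, hj, rfl⟩
      exact vdet_update_of_ne f hj
    have h0 : vdet (update f i (univ.centerMass a (update f i w))) = 0 :=
      convexHull_min hsub hconv hx
    have h1 : univ.centerMass a (update f i w) = ∑ j, (T⁻¹ * a j) • update f i w j := by
      rw [Finset.centerMass, Finset.smul_sum]
      simp only [smul_smul, hT]
    rw [h1, vdet_update_sum f i univ _ _ (by rw [← Finset.mul_sum]; exact inv_mul_cancel₀ hTpos.ne'),
      Finset.sum_eq_single i] at h0
    · simp only [update_self, mul_eq_zero, inv_eq_zero, hw, or_false] at h0
      rcases h0 with h0 | h0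
      · exact hTpos.ne' h0
      · simp [ha] at h0
    · intro j _ hj
      rw [update_of_ne hj, vdet_update_of_ne f hj, mul_zero]
    · simp

/-- The signed volume (times `d!`) of the cone with apex `x` over the `i`-th facet of the simplex
`f`, positive when `x` is on the same side of the facet as `f i`. -/
noncomputable def facetVol {d : ℕ} (f : Fin (d + 1) → EuclideanSpace ℝ (Fin d))
    (i : Fin (d + 1)) (x : EuclideanSpace ℝ (Fin d)) : ℝ :=
  Real.sign (vdet f) * vdet (update f i x)

theorem sign_mul_self_abs (r : ℝ) : Real.sign r * r = |r| := by
  rcases lt_trichotomy r 0 with h | h | h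
  · rw [Real.sign_of_neg h, abs_of_neg h]; ring
  · simp [h]
  · rw [Real.sign_of_pos h, abs_of_pos h]; ring

theorem sum_facetVol {d : ℕ} (f : Fin (d + 1) → EuclideanSpace ℝ (Fin d))
    (x : EuclideanSpace ℝ (Fin d)) : ∑ i, facetVol f i x = |vdet f| := by
  simp only [facetVol, ← Finset.mul_sum, sum_vdet_update, sign_mul_self_abs]

theorem facetVol_self {d : ℕ} (f : Fin (d + 1) → EuclideanSpace ℝ (Fin d))
    (i : Fin (d + 1)) : facetVol f i (f i) = |vdet f| := by
  rw [facetVol, update_eq_self, sign_mul_self_abs]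

/-- The signed facet volumes do not depend on the order of the vertices. -/
theorem facetVol_comp_perm {d : ℕ} (f : Fin (d + 1) → EuclideanSpace ℝ (Fin d))
    (σ : Equiv.Perm (Fin (d + 1))) (j : Fin (d + 1)) (x : EuclideanSpace ℝ (Fin d)) :
    facetVol (f ∘ σ) j x = facetVol f (σ j) x := by
  have h : update (f ∘ σ) j x = update f (σ j) x ∘ σ := by
    rw [Function.update_comp_eq_of_injective _ σ.injective]
  rw [facetVol, facetVol, h, vdet_comp_perm, vdet_comp_perm]
  rcases Int.units_eq_one_or (Equiv.Perm.sign σ) with hs | hs <;> simp [hs, Real.sign_neg]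

/-! ### Simplices sharing a facet -/

/-- `f` lists the vertices of the `d`-simplex `V`, without repetition. -/
def Enumerates {d : ℕ} (f : Fin (d + 1) → EuclideanSpace ℝ (Fin d))
    (V : Finset (EuclideanSpace ℝ (Fin d))) : Prop :=
  Injective f ∧ ∀ x, x ∈ V ↔ ∃ i, f i = x

theorem IsSimplex.exists_enumerates {d : ℕ} {V : Finset (EuclideanSpace ℝ (Fin d))}
    (hV : IsSimplex d V) : ∃ f, Enumerates f V ∧ vdet f ≠ 0 := by
  let e := (V.equivFinOfCardEq hV.1).symm
  refine ⟨fun i => e i, ⟨Subtype.val_injective.comp e.injective, fun x => ⟨fun hx => ?_, ?_⟩⟩, ?_⟩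
  · exact ⟨e.symm ⟨x, hx⟩, by simp⟩
  · rintro ⟨i, rfl⟩; exact (e i).2
  · exact vdet_ne_zero (hV.2.comp_embedding e.toEmbedding)

theorem Enumerates.range_eq {d : ℕ} {f : Fin (d + 1) → EuclideanSpace ℝ (Fin d)}
    {V : Finset (EuclideanSpace ℝ (Fin d))} (h : Enumerates f V) : Set.range f = V := by
  ext x; simp [h.2]

theorem Enumerates.card_eq {d : ℕ} {f : Fin (d + 1) → EuclideanSpace ℝ (Fin d)}
    {V : Finset (EuclideanSpace ℝ (Fin d))} (h : Enumerates f V) : V.card = d + 1 := by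
  have : V = univ.image f := by ext x; simp [h.2]
  rw [this, Finset.card_image_of_injective _ h.1]; simp

/-- Two enumerations of the same simplex differ by a permutation. -/
theorem Enumerates.exists_perm {d : ℕ} {f k : Fin (d + 1) → EuclideanSpace ℝ (Fin d)}
    {V : Finset (EuclideanSpace ℝ (Fin d))} (hf : Enumerates f V) (hk : Enumerates k V) :
    ∃ σ : Equiv.Perm (Fin (d + 1)), k = f ∘ σ := by
  have h : ∀ j, ∃ i, f i = k j := fun j => (hf.2 _).1 ((hk.2 _).2 ⟨j, rfl⟩)
  choose s hs using h
  have hinj : Injective s := fun a b hab => hk.1 (by rw [← hs a, ← hs b, hab])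
  refine ⟨Equiv.ofBijective s (Finite.injective_iff_bijective.1 hinj), ?_⟩
  ext1 j
  exact (hs j).symm

/-- Replacing the one vertex of `V` missing from an adjacent `W` by the vertex of `W` missing from
`V` enumerates `W`. -/
theorem Enumerates.update {d : ℕ} {f : Fin (d + 1) → EuclideanSpace ℝ (Fin d)}
    {V W : Finset (EuclideanSpace ℝ (Fin d))} (hf : Enumerates f V)
    {w : EuclideanSpace ℝ (Fin d)} {i : Fin (d + 1)}
    (hi : V ∩ W = V.erase (f i)) (hw : W = insert w (V ∩ W)) (hwV : w ∉ V) :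
    Enumerates (update f i w) W := by
  have hne : ∀ j, f j ≠ w := fun j hj => hwV ((hf.2 w).2 ⟨j, hj⟩)
  constructor
  · intro a b hab
    by_cases ha : a = i <;> by_cases hb : b = i
    · rw [ha, hb]
    · subst ha; simp [hb] at hab; exact absurd hab.symm (hne b)
    · subst hb; simp [ha] at hab; exact absurd hab (hne a)
    · simp [ha, hb] at hab; exact hf.1 hab
  · intro x
    rw [hw, hi, Finset.mem_insert, Finset.mem_erase, hf.2]
    constructor
    · rintro (rfl | ⟨hx, j, rfl⟩)
      · exact ⟨i, by simp⟩
      · exact ⟨j, update_of_ne (fun h => hx (by rw [h])) _ _⟩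
    · rintro ⟨j, rfl⟩
      by_cases hj : j = i
      · left; simp [hj]
      · right; rw [update_of_ne hj]; exact ⟨fun h => hj (hf.1 h), j, rfl⟩

theorem inter_eq_erase {α : Type*} [DecidableEq α] {d : ℕ} {V W : Finset α} (hV : V.card = d + 1)
    (hVW : (V ∩ W).card = d) {v : α} (hv : v ∈ V) (hvW : v ∉ W) : V ∩ W = V.erase v := by
  refine Finset.eq_of_subset_of_card_le (fun x hx => ?_) ?_
  · rw [Finset.mem_inter] at hx
    exact Finset.mem_erase.2 ⟨fun h => hvW (h ▸ hx.2), hx.1⟩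
  · rw [Finset.card_erase_of_mem hv]; omega

/-- Adjacent simplices lie on opposite sides of their common facet, so the cones over it with a
common apex have opposite signed volumes. -/
theorem facetVol_eq_neg {d : ℕ} {V W : Finset (EuclideanSpace ℝ (Fin d))}
    (hface : convexHull ℝ (V : Set (EuclideanSpace ℝ (Fin d))) ∩
          convexHull ℝ (W : Set (EuclideanSpace ℝ (Fin d))) =
        convexHull ℝ ((V ∩ W : Finset (EuclideanSpace ℝ (Fin d))) :
          Set (EuclideanSpace ℝ (Fin d))))
    (hVW : (V ∩ W).card = d)
    {f k : Fin (d + 1) → EuclideanSpace ℝ (Fin d)} (hf : Enumerates f V) (hk : Enumerates k W)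
    (hf0 : vdet f ≠ 0) (hk0 : vdet k ≠ 0)
    {i j : Fin (d + 1)} (hi : f i ∉ W) (hj : k j ∉ V) (x : EuclideanSpace ℝ (Fin d)) :
    facetVol k j x = -facetVol f i x := by
  have hfi : f i ∈ V := (hf.2 _).2 ⟨i, rfl⟩
  have hkj : k j ∈ W := (hk.2 _).2 ⟨j, rfl⟩
  have h1 : V ∩ W = V.erase (f i) := inter_eq_erase hf.card_eq hVW hfi hi
  have h2 : W ∩ V = W.erase (k j) :=
    inter_eq_erase hk.card_eq (by rwa [Finset.inter_comm]) hkj hj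
  have h3 : W = insert (k j) (V ∩ W) := by
    rw [Finset.inter_comm, h2, Finset.insert_erase hkj]
  have h4 := hf.update h1 h3 hj
  obtain ⟨σ, hσ⟩ := h4.exists_perm hk
  have hσj : σ j = i := by
    by_contra hne
    have := congrFun hσ j
    rw [Function.comp_apply, update_of_ne hne] at this
    exact hj (this ▸ (hf.2 _).2 ⟨_, rfl⟩)
  have hu0 : vdet (Function.update f i (k j)) ≠ 0 := by
    intro h0
    apply hk0
    rw [hσ, vdet_comp_perm, h0, mul_zero]
  have hneg : vdet f * vdet (Function.update f i (k j)) < 0 := by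
    refine lt_of_le_of_ne (not_lt.1 fun hpos => ?_) (mul_ne_zero hf0 hu0)
    obtain ⟨y, hy1, hy2, hy3⟩ := exists_mem_hulls_of_same_side f i (k j) hpos
    rw [hf.range_eq] at hy1
    rw [h4.range_eq] at hy2
    apply hy3
    have hy : y ∈ convexHull ℝ ((V ∩ W : Finset _) : Set (EuclideanSpace ℝ (Fin d))) :=
      hface ▸ ⟨hy1, hy2⟩
    refine convexHull_mono ?_ hy
    intro z hz
    rw [h1, Finset.mem_coe, Finset.mem_erase, hf.2] at hz
    obtain ⟨hz, l, rfl⟩ := hz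
    exact ⟨l, fun h => hz (by rw [h]), rfl⟩
  have key : facetVol k j x = facetVol (Function.update f i (k j)) i x := by
    have := facetVol_comp_perm (Function.update f i (k j)) σ j x
    rwa [← hσ, hσj] at this
  rw [key, facetVol, facetVol, update_idem]
  rcases mul_neg_iff.1 hneg with ⟨h5, h6⟩ | ⟨h5, h6⟩
  · rw [Real.sign_of_pos h5, Real.sign_of_neg h6]; ring
  · rw [Real.sign_of_neg h5, Real.sign_of_pos h6]; ring

/-! ### Degrees and colourings of finite subcomplexes -/

theorem exists_low_degree {d : ℕ} {S : Set (Finset (EuclideanSpace ℝ (Fin d)))}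
    (hsimp : ∀ V ∈ S, IsSimplex d V)
    (hface : ∀ V ∈ S, ∀ W ∈ S, V ≠ W →
      convexHull ℝ (V : Set (EuclideanSpace ℝ (Fin d))) ∩
          convexHull ℝ (W : Set (EuclideanSpace ℝ (Fin d))) =
        convexHull ℝ ((V ∩ W : Finset (EuclideanSpace ℝ (Fin d))) :
          Set (EuclideanSpace ℝ (Fin d))))
    (F : Finset (Finset (EuclideanSpace ℝ (Fin d)))) (hF : ∀ V ∈ F, V ∈ S) (hne : F.Nonempty) :
    ∃ V ∈ F, (F.filter fun W => V ≠ W ∧ (V ∩ W).card = d).card ≤ d := by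
  have henum : ∀ V, ∃ f : Fin (d + 1) → EuclideanSpace ℝ (Fin d),
      V ∈ F → Enumerates f V ∧ vdet f ≠ 0 := fun V => by
    by_cases hV : V ∈ F
    · obtain ⟨f, hf⟩ := (hsimp V (hF V hV)).exists_enumerates
      exact ⟨f, fun _ => hf⟩
    · exact ⟨fun _ => 0, fun h => absurd h hV⟩
  choose e he using henum
  -- `m V W` is the index of the vertex of `V` opposite to the facet shared with `W`
  have hmiss : ∀ V W, ∃ i : Fin (d + 1), V ∈ F → (V ∩ W).card = d → e V i ∉ W := by
    intro V W
    by_cases hV : V ∈ F ∧ (V ∩ W).card = d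
    · by_contra! hcon
      have hsub : V ⊆ V ∩ W := fun x hx => by
        obtain ⟨i, rfl⟩ := ((he V hV.1).1.2 x).1 hx
        exact Finset.mem_inter.2 ⟨hx, (hcon i).2.2⟩
      have := Finset.card_le_card hsub
      rw [(he V hV.1).1.card_eq, hV.2] at this
      omega
    · exact ⟨0, fun h1 h2 => absurd ⟨h1, h2⟩ hV⟩
  choose m hm using hmiss
  have hanti : ∀ V ∈ F, ∀ W ∈ F, V ≠ W → (V ∩ W).card = d →
      ∀ x, facetVol (e W) (m W V) x = -facetVol (e V) (m V W) x := fun V hV W hW hVW hc x =>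
    facetVol_eq_neg (hface V (hF V hV) W (hF W hW) hVW) hc (he V hV).1 (he W hW).1 (he V hV).2
      (he W hW).2 (hm V W hV hc) (hm W V hW (by rwa [Finset.inter_comm])) x
  -- each facet of `V` is shared with at most one other simplex
  have hinj : ∀ V ∈ F, Set.InjOn (m V) (F.filter fun W => V ≠ W ∧ (V ∩ W).card = d) := by
    intro V hV W hW W' hW' hmm
    simp only [Finset.coe_filter, Set.mem_ofPred_eq] at hW hW'
    obtain ⟨hW, hVW, hc⟩ := hW
    obtain ⟨hW', hVW', hc'⟩ := hW'
    by_contra hWW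
    have hv : e V (m V W) ∈ V := ((he V hV).1.2 _).2 ⟨_, rfl⟩
    have hG : V ∩ W = V ∩ W' := by
      rw [inter_eq_erase (he V hV).1.card_eq hc hv (hm V W hV hc),
        inter_eq_erase (he V hV).1.card_eq hc' hv (hmm ▸ hm V W' hV hc')]
    have hlt : (W ∩ W').card < d + 1 := by
      by_contra! hge
      have h1 : W ∩ W' = W := Finset.eq_of_subset_of_card_le Finset.inter_subset_left
        (by rw [(he W hW).1.card_eq]; exact hge)
      have h2 : W ∩ W' = W' := Finset.eq_of_subset_of_card_le Finset.inter_subset_right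
        (by rw [(he W' hW').1.card_eq]; exact hge)
      exact hWW (h1.symm.trans h2)
    have hsub : V ∩ W ⊆ W ∩ W' := fun x hx =>
      Finset.mem_inter.2 ⟨(Finset.mem_inter.1 hx).2, (Finset.mem_inter.1 (hG ▸ hx)).2⟩
    -- the two neighbours meet exactly in the facet they share with `V`
    have hcard : (W ∩ W').card = d := by
      have := Finset.card_le_card hsub
      omega
    have heq : V ∩ W = W ∩ W' := Finset.eq_of_subset_of_card_le hsub (by omega)
    have hj : e W (m W V) ∉ W' := fun h => by
      have h1 : e W (m W V) ∈ W ∩ W' :=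
        Finset.mem_inter.2 ⟨((he W hW).1.2 _).2 ⟨_, rfl⟩, h⟩
      rw [← heq] at h1
      exact hm W V hW (by rwa [Finset.inter_comm]) (Finset.mem_inter.1 h1).1
    have hj' : e W' (m W' V) ∉ W := fun h => by
      have h1 : e W' (m W' V) ∈ W ∩ W' :=
        Finset.mem_inter.2 ⟨h, ((he W' hW').1.2 _).2 ⟨_, rfl⟩⟩
      rw [← heq] at h1
      exact hm W' V hW' (by rwa [Finset.inter_comm]) (Finset.mem_inter.1 h1).1
    -- three simplices cannot be pairwise on opposite sides of one facet
    have e1 := hanti V hV W hW hVW hc (e W (m W V))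
    have e2 := hanti V hV W' hW' hVW' hc' (e W (m W V))
    have e3 := facetVol_eq_neg (hface W (hF W hW) W' (hF W' hW') hWW) hcard (he W hW).1
      (he W' hW').1 (he W hW).2 (he W' hW').2 hj hj' (e W (m W V))
    rw [← hmm] at e2
    have e4 := facetVol_self (e W) (m W V)
    have e5 := abs_pos.2 (he W hW).2
    linarith
  by_contra! hcon
  -- all facets are shared, so the signed volumes cancel in pairs
  have hsum : ∀ V ∈ F, |vdet (e V)| =
      ∑ W ∈ F, if V ≠ W ∧ (V ∩ W).card = d then facetVol (e V) (m V W) 0 else 0 := by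
    intro V hV
    have himg : (F.filter fun W => V ≠ W ∧ (V ∩ W).card = d).image (m V) = univ := by
      refine Finset.eq_univ_of_card _ (le_antisymm (Finset.card_le_univ _) ?_)
      rw [Finset.card_image_of_injOn (hinj V hV), Fintype.card_fin]
      exact hcon V hV
    rw [← sum_facetVol (e V) 0, ← himg, Finset.sum_image (hinj V hV), Finset.sum_filter]
  have hpos : 0 < ∑ V ∈ F, |vdet (e V)| :=
    Finset.sum_pos (fun V hV => abs_pos.2 (he V hV).2) hne
  rw [Finset.sum_congr rfl hsum] at hpos
  have hswap : (∑ V ∈ F, ∑ W ∈ F,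
      if V ≠ W ∧ (V ∩ W).card = d then facetVol (e V) (m V W) 0 else 0) =
      -∑ V ∈ F, ∑ W ∈ F,
        if V ≠ W ∧ (V ∩ W).card = d then facetVol (e V) (m V W) 0 else 0 := by
    conv_lhs => rw [Finset.sum_comm]
    rw [← Finset.sum_neg_distrib]
    refine Finset.sum_congr rfl fun V hV => ?_
    rw [← Finset.sum_neg_distrib]
    refine Finset.sum_congr rfl fun W hW => ?_
    simp only [ne_comm (a := W) (b := V), Finset.inter_comm W V]
    split_ifs with h
    · exact hanti V hV W hW h.1 h.2 0
    · simp
  linarith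

/-- Greedy colouring of a finite subcomplex, removing a simplex of low degree at each step. -/
theorem exists_finite_coloring {d : ℕ} {S : Set (Finset (EuclideanSpace ℝ (Fin d)))}
    (hsimp : ∀ V ∈ S, IsSimplex d V)
    (hface : ∀ V ∈ S, ∀ W ∈ S, V ≠ W →
      convexHull ℝ (V : Set (EuclideanSpace ℝ (Fin d))) ∩
          convexHull ℝ (W : Set (EuclideanSpace ℝ (Fin d))) =
        convexHull ℝ ((V ∩ W : Finset (EuclideanSpace ℝ (Fin d))) :
          Set (EuclideanSpace ℝ (Fin d))))
    (F : Finset (Finset (EuclideanSpace ℝ (Fin d)))) (hF : ∀ V ∈ F, V ∈ S) :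
    ∃ c : Finset (EuclideanSpace ℝ (Fin d)) → Fin (d + 1),
      ∀ V ∈ F, ∀ W ∈ F, V ≠ W → (V ∩ W).card = d → c V ≠ c W := by
  induction F using Finset.strongInduction with
  | H F ih =>
    rcases F.eq_empty_or_nonempty with rfl | hne
    · exact ⟨fun _ => 0, by simp⟩
    obtain ⟨V, hV, hdeg⟩ := exists_low_degree hsimp hface F hF hne
    obtain ⟨c, hc⟩ := ih (F.erase V) (Finset.erase_ssubset hV)
      fun W hW => hF W (Finset.mem_of_mem_erase hW)
    obtain ⟨a, ha⟩ : ∃ a, a ∉ (F.filter fun W => V ≠ W ∧ (V ∩ W).card = d).image c := by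
      by_contra! hall
      have h1 := Finset.card_le_card (fun a _ => hall a : (univ : Finset (Fin (d + 1))) ⊆ _)
      have h2 := Finset.card_image_le (s := F.filter fun W => V ≠ W ∧ (V ∩ W).card = d) (f := c)
      rw [Finset.card_univ, Fintype.card_fin] at h1
      omega
    have hac : ∀ W ∈ F, V ≠ W → (V ∩ W).card = d → a ≠ c W := fun W hW h1 h2 h3 =>
      ha (Finset.mem_image.2 ⟨W, Finset.mem_filter.2 ⟨hW, h1, h2⟩, h3.symm⟩)
    refine ⟨update c V a, fun U hU W hW hUW hcard => ?_⟩
    by_cases h1 : U = V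
    · subst h1
      rw [update_self, update_of_ne hUW.symm]
      exact hac W hW hUW hcard
    · by_cases h2 : W = V
      · subst h2
        rw [update_self, update_of_ne hUW]
        exact (hac U hU hUW.symm (by rwa [Finset.inter_comm])).symm
      · rw [update_of_ne h1, update_of_ne h2]
        exact hc U (Finset.mem_erase.2 ⟨h1, hU⟩) W (Finset.mem_erase.2 ⟨h2, hW⟩) hUW hcard

end

/-- Every (possibly infinite) pure `d`-dimensional simplicial complex in `ℝ^d` can be
properly `(d+1)`-colored: simplices sharing a `(d-1)`-facet receive different colors. -/
theorem simplex_complex_coloring (d : ℕ) (S : Set (Finset (EuclideanSpace ℝ (Fin d))))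
    (hsimp : ∀ V ∈ S, IsSimplex d V)
    (hdisj : ∀ V ∈ S, ∀ W ∈ S, V ≠ W →
      Disjoint (interior (convexHull ℝ (V : Set (EuclideanSpace ℝ (Fin d)))))
        (interior (convexHull ℝ (W : Set (EuclideanSpace ℝ (Fin d))))))
    (hface : ∀ V ∈ S, ∀ W ∈ S, V ≠ W →
      convexHull ℝ (V : Set (EuclideanSpace ℝ (Fin d))) ∩
          convexHull ℝ (W : Set (EuclideanSpace ℝ (Fin d))) =
        convexHull ℝ ((V ∩ W : Finset (EuclideanSpace ℝ (Fin d))) :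
          Set (EuclideanSpace ℝ (Fin d)))) :
    ∃ c : Finset (EuclideanSpace ℝ (Fin d)) → Fin (d + 1),
      ∀ V ∈ S, ∀ W ∈ S, V ≠ W → (V ∩ W).card = d → c V ≠ c W := by
  -- colourings of the finite subcomplexes, glued by Rado selection
  have hfin : ∀ F : Finset (Finset (EuclideanSpace ℝ (Fin d))),
      ∃ c : Finset (EuclideanSpace ℝ (Fin d)) → Fin (d + 1),
        ∀ V ∈ F, V ∈ S → ∀ W ∈ F, W ∈ S → V ≠ W → (V ∩ W).card = d → c V ≠ c W := fun F => by
    obtain ⟨c, hc⟩ := exists_finite_coloring hsimp hface (F.filter (· ∈ S))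
      fun V hV => (Finset.mem_filter.1 hV).2
    exact ⟨c, fun V hV hVS W hW hWS =>
      hc V (Finset.mem_filter.2 ⟨hV, hVS⟩) W (Finset.mem_filter.2 ⟨hW, hWS⟩)⟩
  choose g hg using hfin
  obtain ⟨c, hc⟩ := Finset.rado_selection g
  refine ⟨c, fun V hV W hW hVW hcard => ?_⟩
  obtain ⟨t, ht, hct⟩ := hc {V, W}
  rw [hct V (by simp), hct W (by simp)]
  exact hg t V (ht (by simp)) hV W (ht (by simp)) hW hVW hcard
end
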